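/- For every m ∈ ℕ₀ there exist p ∈ ℕ and a constant c_m < ∞ (depending only on m and the dimension d) such that for all Schwartz functions φ on ℝ^d, ‖φ‖_m^* ≤ c_m ‖φ‖_{H_p}, where ‖φ‖_m^* = max_{|α|≤m} sup_x |(1+|x|²)^{m/2} ∂^α φ(x)| and ‖φ‖_{H_p} = (∑_{k∈ℕ^d} (⟨k⟩^{p/d} (φ, h_k)_{L²})²)^{1/2} with (h_k) the Hermite functions; conversely for every p there exist m and c_p with ‖φ‖_{H_p} ≤ c_p ‖φ‖_m^*. -/

import Mathlib

open MeasureTheory Filter Topology ENNReal NNReal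

/-- The standard Gaussian density on `ℝ`. -/
noncomputable def gaussD : ℝ → ℝ :=
  fun x => (Real.sqrt (2 * Real.pi))⁻¹ * Real.exp (-(x ^ 2) / 2)

/-- The one-dimensional Hermite functions
`h_k(x) = ((-1)^k / √k!) g(x)^{-1/2} (d/dx)^k g(x)`. -/
noncomputable def hermiteFn (k : ℕ) (x : ℝ) : ℝ :=
  ((-1 : ℝ) ^ k / Real.sqrt (Nat.factorial k)) * gaussD x ^ (-(1 / 2 : ℝ)) *
    iteratedDeriv k gaussD x

/-- The `d`-dimensional Hermite functions `h_k(x) = ∏ᵢ h_{kᵢ}(xᵢ)`. -/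
noncomputable def hermiteFnD {d : ℕ} (k : Fin d → ℕ)
    (x : EuclideanSpace ℝ (Fin d)) : ℝ :=
  ∏ i, hermiteFn (k i) (x i)

/-- The Hermite coefficient `φ_k^# = (φ, h_k)_{L²}` of a Schwartz function. -/
noncomputable def hermiteCoeff {d : ℕ}
    (φ : SchwartzMap (EuclideanSpace ℝ (Fin d)) ℝ) (k : Fin d → ℕ) : ℝ :=
  ∫ x, φ x * hermiteFnD k x

/-- The Hermite–Sobolev norm `‖φ‖_{H_p} = (∑_k (⟨k⟩^{p/d} φ_k^#)²)^{1/2}` with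
`⟨k⟩ = (1 + |k|²)^{1/2}`. -/
noncomputable def hermiteSobolevNorm {d : ℕ} (p : ℝ)
    (φ : SchwartzMap (EuclideanSpace ℝ (Fin d)) ℝ) : ℝ :=
  Real.sqrt (∑' k : Fin d → ℕ,
    ((1 + ∑ i, ((k i : ℝ)) ^ 2) ^ (p / (2 * d)) * hermiteCoeff φ k) ^ 2)

/-- Partial derivative in the `i`-th coordinate direction. -/
noncomputable def coordDeriv {d : ℕ} (i : Fin d)
    (f : EuclideanSpace ℝ (Fin d) → ℝ) : EuclideanSpace ℝ (Fin d) → ℝ :=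
  fun x => fderiv ℝ f x (EuclideanSpace.single i 1)

/-- Iterated partial derivative `∂ᵢⁿ` in one coordinate direction. -/
noncomputable def coordDerivPow {d : ℕ} (i : Fin d) :
    ℕ → (EuclideanSpace ℝ (Fin d) → ℝ) → EuclideanSpace ℝ (Fin d) → ℝ
  | 0, f => f
  | n + 1, f => coordDeriv i (coordDerivPow i n f)

/-- The multi-index partial derivative `∂^α = ∂₁^{α₁} ⋯ ∂_d^{α_d}`. -/
noncomputable def multiDeriv {d : ℕ} (α : Fin d → ℕ)
    (f : EuclideanSpace ℝ (Fin d) → ℝ) : EuclideanSpace ℝ (Fin d) → ℝ :=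
  (List.finRange d).foldr (fun i g => coordDerivPow i (α i) g) f

/-- The classical Schwartz seminorms
`‖φ‖_m^* = max_{|α|≤m} sup_x |(1+|x|²)^{m/2} ∂^α φ(x)|`. -/
noncomputable def schwartzStarSeminorm {d : ℕ} (m : ℕ)
    (φ : SchwartzMap (EuclideanSpace ℝ (Fin d)) ℝ) : ℝ :=
  ⨆ α : {α : Fin d → ℕ // ∑ i, α i ≤ m}, ⨆ x : EuclideanSpace ℝ (Fin d),
    (1 + ‖x‖ ^ 2) ^ ((m : ℝ) / 2) * |multiDeriv α.1 (fun y => φ y) x|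


namespace HermSob
open Polynomial

lemma derivative_hermite_succ (n : ℕ) :
    derivative (hermite (n + 1)) = ((n + 1 : ℕ) : ℤ[X]) * hermite n := by
  induction n with
  | zero => simp
  | succ n ih =>
    rw [hermite_succ (n + 1), derivative_sub, derivative_mul, ih, derivative_mul, hermite_succ n]
    simp only [derivative_X, derivative_natCast]
    push_cast
    ring

lemma hermite_rec (k : ℕ) (x : ℝ) :
    aeval x (hermite (k + 1)) = x * aeval x (hermite k) - k * aeval x (hermite (k - 1)) := by
  cases k with
  | zero => simp
  | succ n =>
    rw [hermite_succ (n + 1), derivative_hermite_succ]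
    simp

lemma hasDerivAt_hermite (k : ℕ) (x : ℝ) :
    HasDerivAt (fun y : ℝ => aeval y (hermite k)) (k * aeval x (hermite (k - 1))) x := by
  have h := Polynomial.hasDerivAt_aeval (hermite k) x
  refine h.congr_deriv ?_
  cases k with
  | zero => simp
  | succ n =>
    rw [derivative_hermite_succ]
    simp

/-- normalising constant -/
noncomputable def cc : ℝ := ((Real.sqrt (2 * Real.pi))⁻¹) ^ (1 / 2 : ℝ)

lemma cc_pos : 0 < cc := by unfold cc; positivity

lemma gaussD_iter (k : ℕ) (x : ℝ) :
    iteratedDeriv k gaussD x = (-1) ^ k * aeval x (hermite k) * gaussD x := by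
  have h := Polynomial.deriv_gaussian_eq_hermite_mul_gaussian k x
  rw [← iteratedDeriv_eq_iterate] at h
  have e : gaussD = fun x => (Real.sqrt (2 * Real.pi))⁻¹ * (fun y => Real.exp (-(y ^ 2 / 2))) x := by
    funext x; simp [gaussD, neg_div]
  rw [e, iteratedDeriv_const_mul_field, h]
  ring

lemma gaussD_pow (x : ℝ) : gaussD x ^ (-(1 / 2 : ℝ)) * gaussD x = cc * Real.exp (-(x ^ 2) / 4) := by
  have hpos : 0 < gaussD x := by unfold gaussD; positivity
  have : gaussD x ^ (-(1 / 2 : ℝ)) * gaussD x = gaussD x ^ (1 / 2 : ℝ) := by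
    nth_rw 2 [← Real.rpow_one (gaussD x)]
    rw [← Real.rpow_add hpos]; norm_num
  rw [this]
  unfold gaussD cc
  rw [Real.mul_rpow (by positivity) (by positivity), ← Real.exp_mul]
  congr 2; ring

lemma hermiteFn_eq (k : ℕ) (x : ℝ) :
    hermiteFn k x = aeval x (hermite k) / Real.sqrt (Nat.factorial k) *
      (cc * Real.exp (-(x ^ 2) / 4)) := by
  unfold hermiteFn
  rw [gaussD_iter, ← gaussD_pow]
  have : ((-1 : ℝ) ^ k) * (-1) ^ k = 1 := by rw [← mul_pow]; norm_num
  linear_combination (aeval x (hermite k) / Real.sqrt (Nat.factorial k) *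
    (gaussD x ^ (-(1 / 2 : ℝ)) * gaussD x)) * this

lemma sqrt_fact_succ (k : ℕ) : Real.sqrt (Nat.factorial (k + 1)) =
    Real.sqrt (k + 1) * Real.sqrt (Nat.factorial k) := by
  rw [Nat.factorial_succ]; push_cast
  rw [Real.sqrt_mul (by positivity)]

lemma sqrt_up (k : ℕ) (x : ℝ) : Real.sqrt (k + 1) * hermiteFn (k + 1) x =
    aeval x (hermite (k + 1)) / Real.sqrt (Nat.factorial k) * (cc * Real.exp (-(x ^ 2) / 4)) := by
  rw [hermiteFn_eq, sqrt_fact_succ]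
  have : 0 < Real.sqrt ((k : ℝ) + 1) := by positivity
  have : 0 < Real.sqrt (Nat.factorial k : ℝ) := by positivity
  field_simp

lemma sqrt_down (k : ℕ) (x : ℝ) : Real.sqrt k * hermiteFn (k - 1) x =
    k * aeval x (hermite (k - 1)) / Real.sqrt (Nat.factorial k) *
      (cc * Real.exp (-(x ^ 2) / 4)) := by
  cases k with
  | zero => simp
  | succ n =>
    rw [hermiteFn_eq, sqrt_fact_succ]
    have h1 : 0 < Real.sqrt ((n : ℝ) + 1) := by positivity
    have h2 : 0 < Real.sqrt (Nat.factorial n : ℝ) := by positivity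
    have h3 : Real.sqrt ((n : ℝ) + 1) ^ 2 = n + 1 := Real.sq_sqrt (by positivity)
    push_cast
    field_simp
    rw [h3]

lemma x_mul_hermiteFn (k : ℕ) (x : ℝ) : x * hermiteFn k x =
    Real.sqrt (k + 1) * hermiteFn (k + 1) x + Real.sqrt k * hermiteFn (k - 1) x := by
  rw [sqrt_up, sqrt_down, hermiteFn_eq, hermite_rec]
  ring

lemma hasDerivAt_hermiteFn (k : ℕ) (x : ℝ) : HasDerivAt (hermiteFn k)
    ((Real.sqrt k * hermiteFn (k - 1) x - Real.sqrt (k + 1) * hermiteFn (k + 1) x) / 2) x := by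
  have e : hermiteFn k = fun x => aeval x (hermite k) / Real.sqrt (Nat.factorial k) *
      (cc * Real.exp (-(x ^ 2) / 4)) := funext (hermiteFn_eq k)
  rw [e]
  have h1 := (hasDerivAt_hermite k x).div_const (Real.sqrt (Nat.factorial k))
  have h2 : HasDerivAt (fun x : ℝ => cc * Real.exp (-(x ^ 2) / 4))
      (cc * (Real.exp (-(x ^ 2) / 4) * (-(2 * x) / 4))) x := by
    have := (((hasDerivAt_pow 2 x).neg.div_const 4).exp).const_mul cc
    refine this.congr_deriv ?_
    simp
  refine (h1.mul h2).congr_deriv ?_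
  rw [sqrt_up, sqrt_down, hermite_rec]
  ring

lemma continuous_hermiteFn (k : ℕ) : Continuous (hermiteFn k) :=
  continuous_iff_continuousAt.2 fun x => (hasDerivAt_hermiteFn k x).continuousAt

/-- every polynomial times `h_k` is bounded -/
lemma decay0 (n : ℕ) : ∃ C, ∀ x : ℝ, |x| ^ n * |hermiteFn 0 x| ≤ C := by
  refine ⟨cc * (1 + 4 ^ n * n.factorial), fun x => ?_⟩
  have h0 : hermiteFn 0 x = cc * Real.exp (-(x ^ 2) / 4) := by rw [hermiteFn_eq]; simp
  rw [h0, abs_of_pos (mul_pos cc_pos (Real.exp_pos _))]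
  have h1 : (x ^ 2 / 4) ^ n / n.factorial ≤ Real.exp (x ^ 2 / 4) :=
    Real.pow_div_factorial_le_exp _ (by positivity) n
  have h2 : |x| ^ n ≤ 1 + |x| ^ (2 * n) := by
    rcases le_total (|x|) 1 with h | h
    · have := pow_le_one₀ (abs_nonneg x) h (n := n)
      have : 0 ≤ |x| ^ (2 * n) := by positivity
      linarith
    · have := pow_le_pow_right₀ h (show n ≤ 2 * n by omega)
      linarith
  have h3 : |x| ^ (2 * n) = 4 ^ n * (x ^ 2 / 4) ^ n := by
    rw [pow_mul, sq_abs, ← mul_pow]; congr 1; ring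
  have h4 : Real.exp (-(x ^ 2) / 4) * Real.exp (x ^ 2 / 4) = 1 := by
    rw [← Real.exp_add]; ring_nf; simp
  have h5 : Real.exp (-(x ^ 2) / 4) ≤ 1 := by
    apply Real.exp_le_one_iff.2; nlinarith [sq_nonneg x]
  have h6 : (0 : ℝ) < n.factorial := by positivity
  have h7 : (x ^ 2 / 4) ^ n ≤ n.factorial * Real.exp (x ^ 2 / 4) := by
    rw [div_le_iff₀ h6] at h1; linarith
  have h8 := Real.exp_pos (-(x ^ 2) / 4)
  have : |x| ^ n * Real.exp (-(x ^ 2) / 4) ≤ 1 + 4 ^ n * n.factorial := by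
    calc |x| ^ n * Real.exp (-(x ^ 2) / 4)
        ≤ (1 + 4 ^ n * (n.factorial * Real.exp (x ^ 2 / 4))) * Real.exp (-(x ^ 2) / 4) := by
          gcongr; refine h2.trans ?_; rw [h3]; gcongr
      _ = Real.exp (-(x ^ 2) / 4) + 4 ^ n * n.factorial *
          (Real.exp (-(x ^ 2) / 4) * Real.exp (x ^ 2 / 4)) := by ring
      _ ≤ _ := by rw [h4]; linarith
  calc _ = cc * (|x| ^ n * Real.exp (-(x ^ 2) / 4)) := by ring
    _ ≤ _ := by have := cc_pos; gcongr

lemma decay (k : ℕ) : ∀ n : ℕ, ∃ C, ∀ x : ℝ, |x| ^ n * |hermiteFn k x| ≤ C := by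
  induction k using Nat.strong_induction_on with
  | _ k ih =>
    intro n
    rcases k with _ | k
    · exact decay0 n
    · obtain ⟨C1, h1⟩ := ih k (by omega) (n + 1)
      obtain ⟨C2, h2⟩ := ih (k - 1) (by omega) n
      refine ⟨C1 + Real.sqrt k * C2, fun x => ?_⟩
      have h := x_mul_hermiteFn k x
      have h3 : (1 : ℝ) ≤ Real.sqrt (k + 1) := by
        rw [Real.one_le_sqrt]; linarith [Nat.cast_nonneg (α := ℝ) k]
      have h4 : |hermiteFn (k + 1) x| ≤
          |x| * |hermiteFn k x| + Real.sqrt k * |hermiteFn (k - 1) x| := by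
        calc |hermiteFn (k + 1) x| ≤ Real.sqrt (k + 1) * |hermiteFn (k + 1) x| :=
              le_mul_of_one_le_left (abs_nonneg _) h3
          _ = |Real.sqrt (k + 1) * hermiteFn (k + 1) x| := by
              rw [abs_mul, abs_of_nonneg (Real.sqrt_nonneg _)]
          _ = |x * hermiteFn k x - Real.sqrt k * hermiteFn (k - 1) x| := by rw [h]; ring_nf
          _ ≤ |x * hermiteFn k x| + |Real.sqrt k * hermiteFn (k - 1) x| := abs_sub _ _
          _ = _ := by rw [abs_mul, abs_mul, abs_of_nonneg (Real.sqrt_nonneg _)]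
      calc |x| ^ n * |hermiteFn (k + 1) x| ≤
          |x| ^ n * (|x| * |hermiteFn k x| + Real.sqrt k * |hermiteFn (k - 1) x|) := by gcongr
        _ = |x| ^ (n + 1) * |hermiteFn k x| +
            Real.sqrt k * (|x| ^ n * |hermiteFn (k - 1) x|) := by ring
        _ ≤ _ := by gcongr; exacts [h1 x, h2 x]

lemma bdd_hermiteFn (k : ℕ) : ∃ C, ∀ x : ℝ, |hermiteFn k x| ≤ C := by
  simpa using decay k 0

lemma integrable_hermiteFn (k : ℕ) : Integrable (hermiteFn k) := by
  obtain ⟨C0, h0⟩ := decay k 0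
  obtain ⟨C2, h2⟩ := decay k 2
  refine (integrable_inv_one_add_sq.const_mul (C0 + C2)).mono'
    (continuous_hermiteFn k).aestronglyMeasurable (Eventually.of_forall fun x => ?_)
  rw [Real.norm_eq_abs, ← div_eq_mul_inv, le_div_iff₀ (by positivity)]
  have := h0 x; have := h2 x
  rw [sq_abs] at this
  nlinarith

lemma integrable_hermiteFn_mul (j k : ℕ) : Integrable (fun x => hermiteFn j x * hermiteFn k x) := by
  obtain ⟨C, h⟩ := bdd_hermiteFn j
  exact (integrable_hermiteFn k).bdd_mul (c := C) (continuous_hermiteFn j).aestronglyMeasurable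
    (Eventually.of_forall h)

lemma parts (j k : ℕ) :
    ∫ x, hermiteFn j x * ((Real.sqrt k * hermiteFn (k - 1) x - Real.sqrt (k + 1) * hermiteFn (k + 1) x) / 2) = 
    - ∫ x, ((Real.sqrt j * hermiteFn (j - 1) x - Real.sqrt (j + 1) * hermiteFn (j + 1) x) / 2) * hermiteFn k x := by
  refine integral_mul_deriv_eq_deriv_mul_of_integrable (fun x _ => hasDerivAt_hermiteFn j x)
    (fun x _ => hasDerivAt_hermiteFn k x) ?_ ?_ (integrable_hermiteFn_mul j k)
  · have := (((integrable_hermiteFn_mul j (k - 1)).const_mul (Real.sqrt k)).sub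
      ((integrable_hermiteFn_mul j (k + 1)).const_mul (Real.sqrt (k + 1)))).div_const 2
    refine this.congr (Eventually.of_forall fun x => ?_)
    simp; ring
  · have := (((integrable_hermiteFn_mul (j - 1) k).const_mul (Real.sqrt j)).sub
      ((integrable_hermiteFn_mul (j + 1) k).const_mul (Real.sqrt (j + 1)))).div_const 2
    refine this.congr (Eventually.of_forall fun x => ?_)
    simp; ring

/-- inner products -/
noncomputable def ip (j k : ℕ) : ℝ := ∫ x, hermiteFn j x * hermiteFn k x

lemma ip_parts (j k : ℕ) :
    Real.sqrt k * ip j (k - 1) - Real.sqrt (k + 1) * ip j (k + 1) =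
    - (Real.sqrt j * ip (j - 1) k - Real.sqrt (j + 1) * ip (j + 1) k) := by
  have h := parts j k
  have e1 : ∫ x, hermiteFn j x * ((Real.sqrt k * hermiteFn (k - 1) x - Real.sqrt (k + 1) * hermiteFn (k + 1) x) / 2) = (Real.sqrt k * ip j (k - 1) - Real.sqrt (k + 1) * ip j (k + 1)) / 2 := by
    unfold ip
    rw [← integral_const_mul, ← integral_const_mul, ← integral_sub, ← integral_div]
    · congr 1; ext x; ring
    · exact (integrable_hermiteFn_mul j (k - 1)).const_mul _
    · exact (integrable_hermiteFn_mul j (k + 1)).const_mul _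
  have e2 : ∫ x, ((Real.sqrt j * hermiteFn (j - 1) x - Real.sqrt (j + 1) * hermiteFn (j + 1) x) / 2) * hermiteFn k x = (Real.sqrt j * ip (j - 1) k - Real.sqrt (j + 1) * ip (j + 1) k) / 2 := by
    unfold ip
    rw [← integral_const_mul, ← integral_const_mul, ← integral_sub, ← integral_div]
    · congr 1; ext x; ring
    · exact (integrable_hermiteFn_mul (j - 1) k).const_mul _
    · exact (integrable_hermiteFn_mul (j + 1) k).const_mul _
  rw [e1, e2] at h
  linarith

lemma ip_x (j k : ℕ) :
    Real.sqrt (k + 1) * ip j (k + 1) + Real.sqrt k * ip j (k - 1) =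
    Real.sqrt (j + 1) * ip (j + 1) k + Real.sqrt j * ip (j - 1) k := by
  unfold ip
  rw [← integral_const_mul, ← integral_const_mul, ← integral_add, ← integral_const_mul,
    ← integral_const_mul, ← integral_add]
  · congr 1; ext x
    linear_combination hermiteFn k x * x_mul_hermiteFn j x - hermiteFn j x * x_mul_hermiteFn k x
  · exact (integrable_hermiteFn_mul (j + 1) k).const_mul _
  · exact (integrable_hermiteFn_mul (j - 1) k).const_mul _
  · exact (integrable_hermiteFn_mul j (k + 1)).const_mul _
  · exact (integrable_hermiteFn_mul j (k - 1)).const_mul _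

lemma ip_step (j k : ℕ) : Real.sqrt (k + 1) * ip j (k + 1) = Real.sqrt j * ip (j - 1) k := by
  have h1 := ip_parts j k
  have h2 := ip_x j k
  linarith

lemma ip_zero : ip 0 0 = 1 := by
  unfold ip
  have : ∀ x, hermiteFn 0 x * hermiteFn 0 x = (Real.sqrt (2 * Real.pi))⁻¹ * Real.exp (-(1 / 2) * x ^ 2) := by
    intro x
    rw [hermiteFn_eq]
    have : cc * cc = (Real.sqrt (2 * Real.pi))⁻¹ := by
      unfold cc
      rw [← Real.rpow_add (by positivity)]; norm_num
    rw [← this]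
    have : Real.exp (-(1 / 2) * x ^ 2) = Real.exp (-(x ^ 2) / 4) * Real.exp (-(x ^ 2) / 4) := by
      rw [← Real.exp_add]; ring_nf
    rw [this]; simp; ring
  simp_rw [this]
  rw [integral_const_mul, integral_gaussian]
  have : Real.pi / (1 / 2) = 2 * Real.pi := by ring
  rw [this]
  exact inv_mul_cancel₀ (by positivity)

lemma ip_eq (j k : ℕ) : ip j k = if j = k then 1 else 0 := by
  induction k generalizing j with
  | zero =>
    cases j with
    | zero => simp [ip_zero]
    | succ j =>
      have h := ip_step 0 j
      have hc : ip (j + 1) 0 = ip 0 (j + 1) := by unfold ip; simp_rw [mul_comm]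
      have : Real.sqrt ((j : ℝ) + 1) ≠ 0 := by positivity
      simp at h
      rw [hc]; simp
      rcases h with h | h
      · exact absurd h this
      · exact h
  | succ k ih =>
    have h := ip_step j k
    have h1 : Real.sqrt ((k : ℝ) + 1) ≠ 0 := by positivity
    cases j with
    | zero =>
      simp at h
      rcases h with h | h
      · exact absurd h h1
      · simpa using h
    | succ j =>
      rw [Nat.add_sub_cancel, ih] at h
      by_cases hjk : j = k
      · subst hjk
        simp at h ⊢
        exact mul_left_cancel₀ h1 (by rw [h, mul_one])
      · simp [hjk] at h ⊢
        rcases h with h | h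
        · exact absurd h h1
        · exact h

lemma tendsto_hermiteFn (k : ℕ) : Tendsto (fun x => hermiteFn k x ^ 2) atBot (𝓝 0) := by
  obtain ⟨C, h⟩ := decay k 1
  have h0 : Tendsto (fun x : ℝ => (C / |x|) ^ 2) atBot (𝓝 0) := by
    have := (tendsto_const_nhds (x := C)).div_atTop tendsto_abs_atBot_atTop
    simpa using this.pow 2
  refine squeeze_zero' (Eventually.of_forall fun x => sq_nonneg _) ?_ h0
  filter_upwards [eventually_lt_atBot (0 : ℝ)] with x hx
  have hx' : 0 < |x| := abs_pos.2 hx.ne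
  have : |hermiteFn k x| ≤ C / |x| := by
    rw [le_div_iff₀ hx']; have := h x; simpa [mul_comm] using this
  rw [← sq_abs]
  gcongr

/-- sup bound, polynomial in `k` -/
lemma sup_hermiteFn (k : ℕ) (x : ℝ) : |hermiteFn k x| ≤ 2 * (k + 1) := by
  set D : ℝ → ℝ := fun x =>
    (Real.sqrt k * hermiteFn (k - 1) x - Real.sqrt (k + 1) * hermiteFn (k + 1) x) / 2 with hD
  have hd : ∀ y, HasDerivAt (fun x => hermiteFn k x ^ 2) (2 * hermiteFn k y * D y) y := by
    intro y
    have := (hasDerivAt_hermiteFn k y).pow 2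
    refine this.congr_deriv ?_
    simp [hD]
  set G : ℝ → ℝ := fun x => (k + 1) * (2 * (hermiteFn k x * hermiteFn k x) +
    hermiteFn (k - 1) x * hermiteFn (k - 1) x + hermiteFn (k + 1) x * hermiteFn (k + 1) x) with hG
  have hGi : Integrable G := by
    exact ((((integrable_hermiteFn_mul k k).const_mul 2).add
      (integrable_hermiteFn_mul (k - 1) (k - 1))).add
      (integrable_hermiteFn_mul (k + 1) (k + 1))).const_mul _
  have hGint : ∫ x, G x = 4 * (k + 1) := by
    rw [hG, integral_const_mul, integral_add, integral_add, integral_const_mul]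
    · have := ip_eq k k; have h2 := ip_eq (k - 1) (k - 1); have h3 := ip_eq (k + 1) (k + 1)
      unfold ip at this h2 h3
      rw [this, h2, h3]; simp; ring
    · exact (integrable_hermiteFn_mul k k).const_mul 2
    · exact integrable_hermiteFn_mul _ _
    · exact ((integrable_hermiteFn_mul k k).const_mul 2).add (integrable_hermiteFn_mul _ _)
    · exact integrable_hermiteFn_mul _ _
  have hle : ∀ y, |2 * hermiteFn k y * D y| ≤ G y := by
    intro y
    have a1 : Real.sqrt k ≤ k + 1 := by
      rw [Real.sqrt_le_left (by positivity)]; nlinarith [Nat.cast_nonneg (α := ℝ) k]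
    have a2 : Real.sqrt (k + 1) ≤ k + 1 := by
      rw [Real.sqrt_le_left (by positivity)]; nlinarith [Nat.cast_nonneg (α := ℝ) k]
    have e : 2 * hermiteFn k y * D y = Real.sqrt k * (hermiteFn k y * hermiteFn (k - 1) y) -
      Real.sqrt (k + 1) * (hermiteFn k y * hermiteFn (k + 1) y) := by simp [hD]; ring
    rw [e]
    refine (abs_sub _ _).trans ?_
    rw [abs_mul (Real.sqrt _), abs_mul (Real.sqrt _), abs_of_nonneg (Real.sqrt_nonneg _),
      abs_of_nonneg (Real.sqrt_nonneg _)]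
    have b : ∀ u v : ℝ, |u * v| ≤ u * u + v * v := by
      intro u v; rw [abs_le]; constructor <;> nlinarith [sq_nonneg (u + v), sq_nonneg (u - v), sq_nonneg u, sq_nonneg v]
    calc _ ≤ ((k : ℝ) + 1) * (hermiteFn k y * hermiteFn k y + hermiteFn (k - 1) y * hermiteFn (k - 1) y) +
          (k + 1) * (hermiteFn k y * hermiteFn k y + hermiteFn (k + 1) y * hermiteFn (k + 1) y) := by
          gcongr <;> apply b
      _ = G y := by simp [hG]; ring
  have hcont : Continuous D := by
    have := continuous_hermiteFn (k - 1); have := continuous_hermiteFn (k + 1)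
    fun_prop
  have hci : Integrable (fun y => 2 * hermiteFn k y * D y) :=
    hGi.mono' ((continuous_const.mul (continuous_hermiteFn k)).mul hcont).aestronglyMeasurable
      (Eventually.of_forall hle)
  have hF := integral_Iic_of_hasDerivAt_of_tendsto' (a := x) (fun y _ => hd y) hci.integrableOn
    (tendsto_hermiteFn k)
  have hb : hermiteFn k x ^ 2 ≤ 4 * (k + 1) := by
    rw [sub_zero] at hF
    rw [← hF, ← hGint]
    calc _ ≤ ∫ y in Set.Iic x, G y := by
          apply setIntegral_mono hci.integrableOn hGi.integrableOn
          intro y; exact (le_abs_self _).trans (hle y)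
      _ ≤ _ := setIntegral_le_integral hGi (Eventually.of_forall fun y =>
          (abs_nonneg _).trans (hle y))
  refine abs_le_of_sq_le_sq ?_ (by positivity)
  nlinarith [Nat.cast_nonneg (α := ℝ) k]

end HermSob

namespace HermSob

/-- Euclidean space -/
abbrev Eu (d : ℕ) := EuclideanSpace ℝ (Fin d)

variable {d : ℕ}

/-- raise the index -/
def up (i : Fin d) (k : Fin d → ℕ) : Fin d → ℕ := Function.update k i (k i + 1)
/-- lower the index -/
def down (i : Fin d) (k : Fin d → ℕ) : Fin d → ℕ := Function.update k i (k i - 1)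

lemma hD_update (i : Fin d) (k : Fin d → ℕ) (n : ℕ) (x : Eu d) :
    hermiteFnD (Function.update k i n) x =
      hermiteFn n (x i) * ∏ j ∈ Finset.univ.erase i, hermiteFn (k j) (x j) := by
  unfold hermiteFnD
  rw [← Finset.mul_prod_erase Finset.univ _ (Finset.mem_univ i)]
  simp only [Function.update_self]
  congr 1
  apply Finset.prod_congr rfl
  intro j hj
  rw [Function.update_of_ne (Finset.ne_of_mem_erase hj)]

lemma hD_split (i : Fin d) (k : Fin d → ℕ) (x : Eu d) :
    hermiteFnD k x =
      hermiteFn (k i) (x i) * ∏ j ∈ Finset.univ.erase i, hermiteFn (k j) (x j) := by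
  rw [← hD_update, Function.update_eq_self]

lemma x_mul_hD (i : Fin d) (k : Fin d → ℕ) (x : Eu d) : x i * hermiteFnD k x =
    Real.sqrt (k i + 1) * hermiteFnD (up i k) x + Real.sqrt (k i) * hermiteFnD (down i k) x := by
  rw [up, down, hD_update, hD_update, hD_split i k x, ← mul_assoc, x_mul_hermiteFn]
  ring

lemma differentiable_hermiteFn (k : ℕ) : Differentiable ℝ (hermiteFn k) :=
  fun x => (hasDerivAt_hermiteFn k x).differentiableAt

lemma differentiable_hD (k : Fin d → ℕ) : Differentiable ℝ (hermiteFnD k) := by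
  unfold hermiteFnD
  have : ∀ i, Differentiable ℝ (hermiteFn (k i)) := fun i => differentiable_hermiteFn _
  intro x
  exact (HasFDerivAt.finsetProd (g := fun (i : Fin d) (x : Eu d) => hermiteFn (k i) (x i))
    (fun i _ => DifferentiableAt.hasFDerivAt
    (((this i).comp (by fun_prop : Differentiable ℝ (fun x : Eu d => x i))) x))).differentiableAt

lemma continuous_hD (k : Fin d → ℕ) : Continuous (hermiteFnD k) :=
  (differentiable_hD k).continuous

lemma fderiv_hD (i : Fin d) (k : Fin d → ℕ) (x : Eu d) :
    fderiv ℝ (hermiteFnD k) x (EuclideanSpace.single i 1) =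
    (Real.sqrt (k i) * hermiteFnD (down i k) x - Real.sqrt (k i + 1) * hermiteFnD (up i k) x) / 2 := by
  rw [← (differentiable_hD k x).lineDeriv_eq_fderiv, lineDeriv]
  have e : (fun t : ℝ => hermiteFnD k (x + t • EuclideanSpace.single i (1 : ℝ))) = fun t =>
      hermiteFn (k i) (x i + t) * ∏ j ∈ Finset.univ.erase i, hermiteFn (k j) (x j) := by
    funext t
    rw [hD_split i]
    congr 1
    · simp
    · apply Finset.prod_congr rfl
      intro j hj
      simp [Finset.ne_of_mem_erase hj]
  rw [e]
  have h := (HasDerivAt.comp_const_add (x i) 0 (hasDerivAt_hermiteFn (k i) (x i + 0))).mul_const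
    (∏ j ∈ Finset.univ.erase i, hermiteFn (k j) (x j))
  rw [h.deriv, up, down, hD_update, hD_update, add_zero]
  ring

/-- weight `1 + |k|` -/
def wt (k : Fin d → ℕ) : ℝ := 1 + ∑ i, (k i : ℝ)

lemma one_le_wt (k : Fin d → ℕ) : 1 ≤ wt k := by
  unfold wt
  have : 0 ≤ ∑ i, (k i : ℝ) := Finset.sum_nonneg fun i _ => Nat.cast_nonneg _
  linarith

lemma wt_pos (k : Fin d → ℕ) : 0 < wt k := zero_lt_one.trans_le (one_le_wt k)

lemma le_wt (k : Fin d → ℕ) (i : Fin d) : (k i : ℝ) + 1 ≤ wt k := by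
  unfold wt
  have := Finset.single_le_sum (f := fun i => (k i : ℝ)) (fun i _ => Nat.cast_nonneg (k i))
    (Finset.mem_univ i)
  linarith

lemma wt_up (i : Fin d) (k : Fin d → ℕ) : wt (up i k) = wt k + 1 := by
  unfold wt up
  rw [← Finset.add_sum_erase _ _ (Finset.mem_univ i),
    ← Finset.add_sum_erase Finset.univ (fun i => (k i : ℝ)) (Finset.mem_univ i)]
  have : ∑ x ∈ Finset.univ.erase i, ((Function.update k i (k i + 1) x : ℕ) : ℝ) =
      ∑ x ∈ Finset.univ.erase i, (k x : ℝ) := by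
    apply Finset.sum_congr rfl
    intro j hj
    rw [Function.update_of_ne (Finset.ne_of_mem_erase hj)]
  rw [this]
  simp; ring

lemma up_down (i : Fin d) (k : Fin d → ℕ) (h : k i ≠ 0) : up i (down i k) = k := by
  unfold up down
  simp [Nat.sub_add_cancel (Nat.one_le_iff_ne_zero.2 h)]

lemma down_up (i : Fin d) (k : Fin d → ℕ) : down i (up i k) = k := by
  unfold up down
  simp

lemma sup_hD (k : Fin d → ℕ) (x : Eu d) : |hermiteFnD k x| ≤ 2 ^ d * wt k ^ d := by
  unfold hermiteFnD
  rw [Finset.abs_prod]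
  calc _ ≤ ∏ i : Fin d, (2 * wt k) := by
        apply Finset.prod_le_prod (fun i _ => abs_nonneg _)
        intro i _
        refine (sup_hermiteFn _ _).trans ?_
        have := le_wt k i
        linarith
    _ = _ := by simp [mul_pow]

lemma integral_prodE (f : Fin d → ℝ → ℝ) :
    ∫ x : Eu d, ∏ i, f i (x i) = ∏ i, ∫ x, f i x := by
  rw [← integral_fintype_prod_volume_eq_prod]
  exact (EuclideanSpace.volume_preserving_symm_measurableEquiv_toLp (Fin d)).integral_comp'
    (fun x : Fin d → ℝ => ∏ i, f i (x i))

lemma integrable_prodE (f : Fin d → ℝ → ℝ) (hf : ∀ i, Integrable (f i)) :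
    Integrable (fun x : Eu d => ∏ i, f i (x i)) := by
  have h := Integrable.fintype_prod (f := f) (μ := fun _ => volume) hf
  exact (EuclideanSpace.volume_preserving_symm_measurableEquiv_toLp (Fin d)).integrable_comp_emb
    (MeasurableEquiv.measurableEmbedding _) |>.2 h

lemma integrable_hD (k : Fin d → ℕ) : Integrable (hermiteFnD k) :=
  integrable_prodE _ fun _ => integrable_hermiteFn _

lemma integrable_hD_mul (j k : Fin d → ℕ) :
    Integrable (fun x : Eu d => hermiteFnD j x * hermiteFnD k x) := by
  have := integrable_prodE _ fun i => integrable_hermiteFn_mul (j i) (k i)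
  refine this.congr (Eventually.of_forall fun x => ?_)
  simp [hermiteFnD, Finset.prod_mul_distrib]

lemma ipD (j k : Fin d → ℕ) :
    ∫ x : Eu d, hermiteFnD j x * hermiteFnD k x = if j = k then 1 else 0 := by
  have := integral_prodE fun i x => hermiteFn (j i) x * hermiteFn (k i) x
  simp only [hermiteFnD, ← Finset.prod_mul_distrib]
  rw [this]
  have e : ∀ i, ∫ x, hermiteFn (j i) x * hermiteFn (k i) x = if j i = k i then 1 else 0 :=
    fun i => ip_eq _ _
  simp_rw [e]
  by_cases h : j = k
  · subst h; simp
  · rw [if_neg h]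
    obtain ⟨i, hi⟩ := Function.ne_iff.1 h
    exact Finset.prod_eq_zero (Finset.mem_univ i) (if_neg hi)

abbrev Sch (d : ℕ) := SchwartzMap (Eu d) ℝ

/-- multiplication by `x_i` -/
noncomputable def Xop (i : Fin d) : Module.End ℝ (Sch d) :=
  (SchwartzMap.smulLeftCLM ℝ (fun x : Eu d => x i)).toLinearMap

/-- partial derivative -/
noncomputable def Dop (i : Fin d) : Module.End ℝ (Sch d) :=
  (LineDeriv.lineDerivOpCLM ℝ (Sch d) (EuclideanSpace.single i (1 : ℝ) : Eu d)).toLinearMap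

lemma Xop_apply (i : Fin d) (φ : Sch d) (x : Eu d) : Xop i φ x = x i * φ x := by
  have h : Function.HasTemperateGrowth (fun x : Eu d => x i) :=
    (EuclideanSpace.proj (𝕜 := ℝ) i).hasTemperateGrowth
  exact SchwartzMap.smulLeftCLM_apply_apply h φ x

lemma Dop_apply (i : Fin d) (φ : Sch d) (x : Eu d) :
    Dop i φ x = fderiv ℝ φ x (EuclideanSpace.single i 1) :=
  SchwartzMap.lineDerivOp_apply_eq_fderiv _ _ _

lemma integrable_mul_hD (φ : Sch d) (k : Fin d → ℕ) :
    Integrable (fun x => φ x * hermiteFnD k x) :=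
  φ.integrable.mul_bdd (c := 2 ^ d * wt k ^ d) (continuous_hD k).aestronglyMeasurable
    (Eventually.of_forall fun x => sup_hD k x)

lemma coeff_X (i : Fin d) (φ : Sch d) (k : Fin d → ℕ) : hermiteCoeff (Xop i φ) k =
    Real.sqrt (k i + 1) * hermiteCoeff φ (up i k) + Real.sqrt (k i) * hermiteCoeff φ (down i k) := by
  unfold hermiteCoeff
  rw [← integral_const_mul, ← integral_const_mul, ← integral_add]
  · congr 1; ext x
    rw [Xop_apply]
    linear_combination φ x * x_mul_hD i k x
  · exact (integrable_mul_hD φ _).const_mul _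
  · exact (integrable_mul_hD φ _).const_mul _

lemma coeff_D (i : Fin d) (φ : Sch d) (k : Fin d → ℕ) : hermiteCoeff (Dop i φ) k =
    (Real.sqrt (k i + 1) * hermiteCoeff φ (up i k) -
      Real.sqrt (k i) * hermiteCoeff φ (down i k)) / 2 := by
  have hi := ((((integrable_mul_hD φ (down i k)).const_mul (Real.sqrt (k i))).sub
      ((integrable_mul_hD φ (up i k)).const_mul (Real.sqrt (k i + 1)))).div_const 2)
  have h := integral_mul_fderiv_eq_neg_fderiv_mul_of_integrable (μ := (volume : Measure (Eu d)))
    (f := φ) (g := hermiteFnD k)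
    (v := EuclideanSpace.single i 1) ?_ ?_ (integrable_mul_hD φ k)
    (fun x _ => φ.differentiableAt) (fun x _ => differentiable_hD k x)
  · unfold hermiteCoeff
    simp_rw [Dop_apply]
    rw [eq_neg_iff_add_eq_zero, add_comm, ← eq_neg_iff_add_eq_zero] at h
    rw [h]
    simp_rw [fderiv_hD]
    rw [← integral_const_mul, ← integral_const_mul, ← integral_sub, ← integral_div, ← integral_neg]
    · congr 1; ext x; ring
    · exact (integrable_mul_hD φ _).const_mul _
    · exact (integrable_mul_hD φ _).const_mul _
  · simp_rw [← Dop_apply]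
    exact integrable_mul_hD _ _
  · simp_rw [fderiv_hD]
    refine hi.congr (Eventually.of_forall fun x => ?_)
    simp; ring

end HermSob

namespace HermSob

variable {d : ℕ}

lemma summable_prod : Summable (fun k : Fin d → ℕ => ∏ i, (((k i : ℝ) + 1) ^ 2)⁻¹) := by
  classical
  have hs : Summable (fun n : ℕ => (((n : ℝ) + 1) ^ 2)⁻¹) := by
    have := (_root_.summable_nat_add_iff 1).2 (Real.summable_nat_pow_inv.2 (show 1 < 2 by norm_num))
    simpa using this
  refine summable_of_sum_le (c := (∑' n : ℕ, (((n : ℝ) + 1) ^ 2)⁻¹) ^ d) ?_ ?_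
  · intro k
    exact Finset.prod_nonneg fun i _ => by positivity
  · intro u
    have hsub : u ⊆ Fintype.piFinset (fun i : Fin d => u.image (fun k : Fin d → ℕ => k i)) := by
      intro k hk
      rw [Fintype.mem_piFinset]
      intro i
      exact Finset.mem_image_of_mem (fun k => k i) hk
    calc ∑ k ∈ u, ∏ i, (((k i : ℝ) + 1) ^ 2)⁻¹ ≤
          ∑ k ∈ Fintype.piFinset (fun i : Fin d => u.image (fun k : Fin d → ℕ => k i)),
          ∏ i, ((((k i : ℕ) : ℝ) + 1) ^ 2)⁻¹ :=
          Finset.sum_le_sum_of_subset_of_nonneg hsub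
            (fun k _ _ => Finset.prod_nonneg fun i _ => by positivity)
      _ = ∏ i : Fin d, ∑ n ∈ u.image (fun k : Fin d → ℕ => k i), ((((n : ℕ) : ℝ) + 1) ^ 2)⁻¹ :=
          (Finset.prod_univ_sum (fun i : Fin d => u.image (fun k : Fin d → ℕ => k i))
            (fun _ n => ((((n : ℕ) : ℝ) + 1) ^ 2)⁻¹)).symm
      _ ≤ ∏ i : Fin d, ∑' n : ℕ, (((n : ℝ) + 1) ^ 2)⁻¹ := by
          apply Finset.prod_le_prod
          · intro i _; exact Finset.sum_nonneg fun n _ => by positivity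
          · intro i _
            exact hs.sum_le_tsum _ fun n _ => by positivity
      _ = _ := by simp

lemma summable_wt : Summable (fun k : Fin d → ℕ => (wt k ^ (2 * d))⁻¹) := by
  refine Summable.of_nonneg_of_le (fun k => ?_) (fun k => ?_) summable_prod
  · have := wt_pos k; positivity
  · rw [Finset.prod_inv_distrib]
    apply inv_anti₀
    · exact Finset.prod_pos fun i _ => by positivity
    · calc _ ≤ ∏ i : Fin d, wt k ^ 2 := by
            apply Finset.prod_le_prod
            · intro i _; positivity
            · intro i _
              have := le_wt k i
              gcongr
        _ = _ := by simp [pow_mul]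

/-- span of Hermite functions -/
noncomputable def W (d : ℕ) : Submodule ℝ (Eu d → ℝ) :=
  Submodule.span ℝ (Set.range fun k : Fin d → ℕ => (hermiteFnD k : Eu d → ℝ))

lemma hD_mem (k : Fin d → ℕ) : (hermiteFnD k : Eu d → ℝ) ∈ W d :=
  Submodule.subset_span ⟨k, rfl⟩

lemma mul_inner_mem (y : Eu d) (u : Eu d → ℝ) (hu : u ∈ W d) :
    (fun x => inner ℝ x y * u x) ∈ W d := by
  induction hu using Submodule.span_induction with
  | mem u h =>
    obtain ⟨k, rfl⟩ := h
    have : (fun x : Eu d => inner ℝ x y * hermiteFnD k x) = ∑ i, y i •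
        (Real.sqrt (k i + 1) • (hermiteFnD (up i k) : Eu d → ℝ) +
          Real.sqrt (k i) • (hermiteFnD (down i k) : Eu d → ℝ)) := by
      funext x
      simp only [PiLp.inner_apply, Finset.sum_mul, Finset.sum_apply, Pi.smul_apply, Pi.add_apply,
        smul_eq_mul]
      apply Finset.sum_congr rfl
      intro i _
      rw [← x_mul_hD]
      simp
      ring
    simp only
    rw [this]
    exact Submodule.sum_mem _ fun i _ => Submodule.smul_mem _ _ (Submodule.add_mem _
      (Submodule.smul_mem _ _ (hD_mem _)) (Submodule.smul_mem _ _ (hD_mem _)))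
  | zero =>
    have e : (fun x : Eu d => inner ℝ x y * (0 : Eu d → ℝ) x) = 0 := by funext x; simp
    rw [e]; exact (W d).zero_mem
  | add u v _ _ hu hv =>
    have := (W d).add_mem hu hv
    convert this using 1
    funext x; simp [mul_add]
  | smul a u _ hu =>
    have := (W d).smul_mem a hu
    convert this using 1
    funext x; simp; ring

lemma inner_pow_mem (y : Eu d) (n : ℕ) :
    (fun x : Eu d => inner ℝ x y ^ n * hermiteFnD 0 x) ∈ W d := by
  induction n with
  | zero => simpa using! hD_mem (0 : Fin d → ℕ)
  | succ n ih =>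
    have := mul_inner_mem y _ ih
    convert this using 1
    funext x; ring

lemma h0_eq (x : Eu d) : hermiteFnD 0 x = cc ^ d * Real.exp (-(‖x‖ ^ 2) / 4) := by
  unfold hermiteFnD
  rw [EuclideanSpace.real_norm_sq_eq, ← Finset.sum_neg_distrib, Finset.sum_div, Real.exp_sum]
  simp [hermiteFn_eq, Finset.prod_mul_distrib]

lemma integrable_gauss : Integrable (fun x : Eu d => Real.exp (-(‖x‖ ^ 2) / 8)) := by
  have h := integrable_prodE (d := d) (fun _ x => Real.exp (-(1 / 8) * x ^ 2))
    (fun i => integrable_exp_neg_mul_sq (by norm_num))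
  refine h.congr (Eventually.of_forall fun x => ?_)
  simp only
  rw [← Real.exp_sum, EuclideanSpace.real_norm_sq_eq, ← Finset.mul_sum]
  congr 1; ring

lemma integrable_mul_h (f : Eu d → ℝ) (hf : Continuous f) (B : ℝ) (hB : ∀ x, |f x| ≤ B)
    (k : Fin d → ℕ) : Integrable (fun x => f x * hermiteFnD k x) :=
  (integrable_hD k).bdd_mul (c := B) hf.aestronglyMeasurable (Eventually.of_forall hB)

lemma integral_W (f : Eu d → ℝ) (hf : Continuous f) (B : ℝ) (hB : ∀ x, |f x| ≤ B)
    (h0 : ∀ k, ∫ x, f x * hermiteFnD k x = 0) (u : Eu d → ℝ) (hu : u ∈ W d) :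
    Integrable (fun x => f x * u x) ∧ ∫ x, f x * u x = 0 := by
  induction hu using Submodule.span_induction with
  | mem u h =>
    obtain ⟨k, rfl⟩ := h
    exact ⟨integrable_mul_h f hf B hB k, h0 k⟩
  | zero => simp
  | add u v _ _ hu hv =>
    simp only [Pi.add_apply, mul_add]
    exact ⟨hu.1.add hv.1, by rw [integral_add hu.1 hv.1, hu.2, hv.2, add_zero]⟩
  | smul a u _ hu =>
    have e : ∀ x, f x * (a • u) x = a * (f x * u x) := fun x => by simp; ring
    simp only [e]
    exact ⟨hu.1.const_mul a, by rw [integral_const_mul, hu.2, mul_zero]⟩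

open FourierTransform in
lemma fourier_inj (F : Eu d → ℂ) (h : Continuous F) (hi : Integrable F)
    (h0 : ∀ y, 𝓕 F y = 0) : F = 0 := by
  have e : 𝓕 F = 0 := funext h0
  have := h.fourierInv_fourier_eq hi (by rw [e]; exact integrable_zero _ _ _)
  rw [← this, e]
  ext y
  rw [Real.fourierInv_eq']
  simp

lemma hD_complete (f : Eu d → ℝ) (hf : Continuous f) (B : ℝ) (hB : ∀ x, |f x| ≤ B)
    (h0 : ∀ k, ∫ x, f x * hermiteFnD k x = 0) (x : Eu d) : f x = 0 := by
  have hc : Continuous (fun x => ((f x * hermiteFnD 0 x : ℝ) : ℂ)) :=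
    Complex.continuous_ofReal.comp (hf.mul (continuous_hD 0))
  have hB0 : 0 ≤ B := (abs_nonneg _).trans (hB 0)
  have key := fourier_inj (fun x => ((f x * hermiteFnD 0 x : ℝ) : ℂ)) hc
    (integrable_mul_h f hf B hB 0).ofReal ?_
  · have := congrFun key x
    simp only [Pi.zero_apply, Complex.ofReal_eq_zero, mul_eq_zero] at this
    rcases this with h | h
    · exact h
    · exfalso
      rw [h0_eq] at h
      have := cc_pos
      have h' : 0 < cc ^ d * Real.exp (-(‖x‖ ^ 2) / 4) := by positivity
      exact h'.ne' h
  · intro y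
    rw [Real.fourier_eq']
    set bound : ℕ → Eu d → ℝ := fun n x =>
      |2 * Real.pi * inner ℝ x y| ^ n / n.factorial * |f x * hermiteFnD 0 x| with hbound
    have hbs : ∀ x, HasSum (fun n => bound n x)
        (Real.exp |2 * Real.pi * inner ℝ x y| * |f x * hermiteFnD 0 x|) := by
      intro x
      have := NormedSpace.expSeries_div_hasSum_exp (|2 * Real.pi * inner ℝ x y|)
      rw [← Real.exp_eq_exp_ℝ] at this
      exact this.mul_right _
    have H := hasSum_integral_of_dominated_convergence (μ := (volume : Measure (Eu d))) bound
      (F := fun n x => (((-2 * Real.pi * inner ℝ x y : ℝ) : ℂ) * Complex.I) ^ n / n.factorial *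
        ((f x * hermiteFnD 0 x : ℝ) : ℂ))
      (f := fun x => Complex.exp (((-2 * Real.pi * inner ℝ x y : ℝ) : ℂ) * Complex.I) •
        ((f x * hermiteFnD 0 x : ℝ) : ℂ)) ?_ ?_ ?_ ?_ ?_
    · refine H.unique ?_
      have hz : ∀ n : ℕ, ∫ x : Eu d, (((-2 * Real.pi * inner ℝ x y : ℝ) : ℂ) * Complex.I) ^ n /
          n.factorial * ((f x * hermiteFnD 0 x : ℝ) : ℂ) = 0 := by
        intro n
        have hW := (integral_W f hf B hB h0 _ (inner_pow_mem y n)).2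
        have e : ∀ x : Eu d, (((-2 * Real.pi * inner ℝ x y : ℝ) : ℂ) * Complex.I) ^ n /
          n.factorial * ((f x * hermiteFnD 0 x : ℝ) : ℂ) =
          ((-2 * Real.pi) * Complex.I) ^ n / n.factorial *
            ((f x * (inner ℝ x y ^ n * hermiteFnD 0 x) : ℝ) : ℂ) := by
          intro x; push_cast; ring
        simp_rw [e]
        rw [integral_const_mul, integral_complex_ofReal, hW]
        simp
      simp_rw [hz]
      exact hasSum_zero
    · intro n
      apply Continuous.aestronglyMeasurable
      have : Continuous fun x : Eu d => ((-2 * Real.pi * inner ℝ x y : ℝ) : ℂ) :=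
        Complex.continuous_ofReal.comp (by fun_prop)
      fun_prop
    · intro n
      refine Eventually.of_forall fun x => ?_
      simp only [hbound]
      rw [norm_mul, norm_div, norm_pow, norm_mul, Complex.norm_real, Complex.norm_real]
      simp [abs_mul]
    · exact Eventually.of_forall fun x => (hbs x).summable
    · have e : (fun x => ∑' n, bound n x) = fun x =>
        (Real.exp |2 * Real.pi * inner ℝ x y| * |f x * hermiteFnD 0 x|) :=
        funext fun x => (hbs x).tsum_eq
      rw [e]
      set c : ℝ := 2 * Real.pi * ‖y‖ with hcdef
      refine (integrable_gauss.const_mul (Real.exp (2 * c ^ 2) * (B * cc ^ d))).mono' ?_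
        (Eventually.of_forall fun x => ?_)
      · apply Continuous.aestronglyMeasurable
        have := continuous_hD (0 : Fin d → ℕ)
        fun_prop
      · rw [Real.norm_eq_abs, abs_mul, abs_abs, abs_mul (f x), abs_of_pos (Real.exp_pos _), h0_eq]
        have hcc := cc_pos
        rw [abs_of_pos (show 0 < cc ^ d * Real.exp (-(‖x‖ ^ 2) / 4) by positivity)]
        have h1 : |2 * Real.pi * inner ℝ x y| ≤ c * ‖x‖ := by
          rw [abs_mul, abs_of_pos Real.two_pi_pos, hcdef]
          have := abs_real_inner_le_norm x y
          have hp := Real.two_pi_pos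
          nlinarith
        have h2 : Real.exp |2 * Real.pi * inner ℝ x y| * Real.exp (-(‖x‖ ^ 2) / 4) ≤
            Real.exp (2 * c ^ 2) * Real.exp (-(‖x‖ ^ 2) / 8) := by
          rw [← Real.exp_add, ← Real.exp_add]
          apply Real.exp_le_exp.2
          nlinarith [sq_nonneg (4 * c - ‖x‖)]
        calc _ = |f x| * cc ^ d * (Real.exp |2 * Real.pi * inner ℝ x y| *
              Real.exp (-(‖x‖ ^ 2) / 4)) := by ring
          _ ≤ B * cc ^ d * (Real.exp (2 * c ^ 2) * Real.exp (-(‖x‖ ^ 2) / 8)) := by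
              gcongr; exact hB x
          _ = _ := by ring
    · refine Eventually.of_forall fun x => ?_
      have := NormedSpace.expSeries_div_hasSum_exp
        (((-2 * Real.pi * inner ℝ x y : ℝ) : ℂ) * Complex.I)
      rw [← Complex.exp_eq_exp_ℂ] at this
      exact this.mul_right _

/-- constant in the sup bound -/
noncomputable def Ksup (d : ℕ) : ℝ := 2 ^ d * ∑' k : Fin d → ℕ, (wt k ^ (2 * d))⁻¹

lemma sup_of_coeff (φ : Sch d) (B : ℝ)
    (h : ∀ k, wt k ^ (3 * d) * |hermiteCoeff φ k| ≤ B) (x : Eu d) : |φ x| ≤ Ksup d * B := by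
  set u : (Fin d → ℕ) → ℝ := fun k => (2 ^ d * B) * (wt k ^ (2 * d))⁻¹ with hu
  have hus : Summable u := summable_wt.mul_left _
  have hut : ∑' k, u k = Ksup d * B := by rw [Ksup, mul_right_comm]; exact _root_.tsum_mul_left
  have hle : ∀ k x, ‖hermiteCoeff φ k * hermiteFnD k x‖ ≤ u k := by
    intro k x
    have hw := wt_pos k
    rw [Real.norm_eq_abs, abs_mul, hu]
    simp only
    rw [← div_eq_mul_inv, le_div_iff₀ (by positivity)]
    calc _ ≤ |hermiteCoeff φ k| * (2 ^ d * wt k ^ d) * wt k ^ (2 * d) := by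
          gcongr; exact sup_hD k x
      _ = 2 ^ d * (wt k ^ (3 * d) * |hermiteCoeff φ k|) := by ring
      _ ≤ _ := by gcongr; exact h k
  set S : Eu d → ℝ := fun x => ∑' k, hermiteCoeff φ k * hermiteFnD k x with hS
  have hSc : Continuous S :=
    continuous_tsum (fun k => (continuous_hD k).const_mul _) hus hle
  have hSb : ∀ x, |S x| ≤ Ksup d * B := by
    intro x
    rw [← hut]
    exact tsum_of_norm_bounded hus.hasSum (fun k => hle k x)
  have hSj : ∀ j, ∫ x, S x * hermiteFnD j x = hermiteCoeff φ j := by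
    intro j
    have H := hasSum_integral_of_summable_integral_norm (μ := (volume : Measure (Eu d)))
      (F := fun k x => hermiteCoeff φ k * hermiteFnD k x * hermiteFnD j x) ?_ ?_
    · have e : ∀ k, ∫ x : Eu d, hermiteCoeff φ k * hermiteFnD k x * hermiteFnD j x =
          if k = j then hermiteCoeff φ j else 0 := by
        intro k
        simp_rw [mul_assoc]
        rw [integral_const_mul, ipD]
        split_ifs with hh <;> simp [hh]
      simp_rw [e] at H
      have H2 := hasSum_ite_eq j (hermiteCoeff φ j)
      rw [H2.unique H]
      congr 1; ext x
      rw [hS, _root_.tsum_mul_right]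
    · intro k
      simp_rw [mul_assoc]
      exact (integrable_hD_mul k j).const_mul _
    · refine Summable.of_nonneg_of_le (fun k => integral_nonneg fun x => norm_nonneg _) (fun k => ?_)
        (hus.mul_right (∫ x : Eu d, ‖hermiteFnD j x‖))
      rw [← integral_const_mul]
      apply integral_mono
      · apply Integrable.norm
        simp_rw [mul_assoc]
        exact (integrable_hD_mul k j).const_mul _
      · exact (integrable_hD j).norm.const_mul _
      · intro x
        simp only
        rw [norm_mul]
        gcongr
        exact hle k x
  have hz := hD_complete (fun x => φ x - S x) (φ.continuous.sub hSc)
    (SchwartzMap.seminorm ℝ 0 0 φ + Ksup d * B) ?_ ?_ x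
  · have : φ x = S x := by linarith
    rw [this]; exact hSb x
  · intro x
    refine (abs_sub _ _).trans (add_le_add ?_ (hSb x))
    exact φ.norm_le_seminorm ℝ x
  · intro k
    simp_rw [sub_mul]
    rw [integral_sub (integrable_mul_hD φ k) (integrable_mul_h S hSc _ hSb k), hSj]
    exact sub_self _

end HermSob

namespace HermSob

variable {d : ℕ}

lemma coeff_add (φ ψ : Sch d) (k : Fin d → ℕ) :
    hermiteCoeff (φ + ψ) k = hermiteCoeff φ k + hermiteCoeff ψ k := by
  unfold hermiteCoeff
  rw [← integral_add (integrable_mul_hD φ k) (integrable_mul_hD ψ k)]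
  congr 1; ext x
  rw [SchwartzMap.add_apply]; ring

lemma coeff_smul (a : ℝ) (φ : Sch d) (k : Fin d → ℕ) :
    hermiteCoeff (a • φ) k = a * hermiteCoeff φ k := by
  unfold hermiteCoeff
  rw [← integral_const_mul]
  congr 1; ext x
  rw [SchwartzMap.smul_apply, smul_eq_mul]; ring

/-- weighted sup bound of the Hermite coefficients -/
def Pc (n : ℕ) (φ : Sch d) (B : ℝ) : Prop := ∀ k, wt k ^ n * |hermiteCoeff φ k| ≤ B

lemma Pc.nonneg {n : ℕ} {φ : Sch d} {B : ℝ} (h : Pc n φ B) : 0 ≤ B :=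
  le_trans (mul_nonneg (pow_nonneg (wt_pos 0).le _) (abs_nonneg _)) (h 0)

lemma Pc.mono {n m : ℕ} (hnm : n ≤ m) {φ : Sch d} {B : ℝ} (h : Pc m φ B) : Pc n φ B := fun k =>
  (mul_le_mul_of_nonneg_right (pow_le_pow_right₀ (one_le_wt k) hnm) (abs_nonneg _)).trans (h k)

/-- operators which are continuous for the coefficient seminorms -/
def Good (T : Module.End ℝ (Sch d)) : Prop :=
  ∀ n, ∃ n' : ℕ, ∃ C : ℝ, 0 ≤ C ∧ ∀ φ B, Pc n' φ B → Pc n (T φ) (C * B)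

/-- The algebra of good operators. -/
def goodAlg (d : ℕ) : Subalgebra ℝ (Module.End ℝ (Sch d)) where
  carrier := {T | Good T}
  mul_mem' := by
    intro S T hS hT n
    obtain ⟨n1, C1, h1, H1⟩ := hS n
    obtain ⟨n2, C2, h2, H2⟩ := hT n1
    refine ⟨n2, C1 * C2, by positivity, fun φ B h => ?_⟩
    rw [mul_assoc]
    exact H1 _ _ (H2 _ _ h)
  add_mem' := by
    intro S T hS hT n
    obtain ⟨n1, C1, h1, H1⟩ := hS n
    obtain ⟨n2, C2, h2, H2⟩ := hT n
    refine ⟨max n1 n2, C1 + C2, by positivity, fun φ B h k => ?_⟩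
    have a1 := H1 φ B (h.mono (le_max_left _ _)) k
    have a2 := H2 φ B (h.mono (le_max_right _ _)) k
    rw [LinearMap.add_apply, coeff_add]
    calc _ ≤ wt k ^ n * (|hermiteCoeff (S φ) k| + |hermiteCoeff (T φ) k|) :=
          mul_le_mul_of_nonneg_left (abs_add_le _ _) (pow_nonneg (wt_pos k).le _)
      _ ≤ _ := by linarith
  algebraMap_mem' := by
    intro a n
    refine ⟨n, |a|, abs_nonneg _, fun φ B h k => ?_⟩
    rw [Module.algebraMap_end_apply, coeff_smul, abs_mul]
    have := mul_le_mul_of_nonneg_left (h k) (abs_nonneg a)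
    linarith

lemma up_bound (n : ℕ) (i : Fin d) (φ : Sch d) (B : ℝ) (h : Pc (n + 1) φ B) (k : Fin d → ℕ) :
    wt k ^ n * (Real.sqrt (k i + 1) * |hermiteCoeff φ (up i k)|) ≤ B := by
  have h1 : Real.sqrt (k i + 1) ≤ wt (up i k) := by
    rw [wt_up]
    have : Real.sqrt (k i + 1) ≤ k i + 1 := by
      apply Real.sqrt_le_self_iff.2; right; have : (0:ℝ) ≤ k i := by positivity
      linarith
    linarith [le_wt k i]
  have h2 : wt k ≤ wt (up i k) := by rw [wt_up]; linarith
  refine le_trans ?_ (h (up i k))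
  rw [pow_succ, mul_assoc]
  have := (wt_pos k).le
  have := (wt_pos (up i k)).le
  gcongr

lemma down_bound (n : ℕ) (i : Fin d) (φ : Sch d) (B : ℝ) (h : Pc (n + 1) φ B) (k : Fin d → ℕ) :
    wt k ^ n * (Real.sqrt (k i) * |hermiteCoeff φ (down i k)|) ≤ 2 ^ (n + 1) * B := by
  have hB := h.nonneg
  by_cases hk : k i = 0
  · rw [hk]; simp; positivity
  have e := wt_up i (down i k)
  rw [up_down i k hk] at e
  have h1' := one_le_wt (down i k)
  have h1 : Real.sqrt (k i) ≤ 2 * wt (down i k) := by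
    have : Real.sqrt (k i) ≤ k i := by
      apply Real.sqrt_le_self_iff.2; right; exact_mod_cast Nat.one_le_iff_ne_zero.2 hk
    linarith [le_wt k i]
  have h2 : wt k ≤ 2 * wt (down i k) := by linarith
  have := (wt_pos k).le
  calc _ ≤ (2 * wt (down i k)) ^ n * ((2 * wt (down i k)) * |hermiteCoeff φ (down i k)|) := by
        gcongr
    _ = 2 ^ (n + 1) * (wt (down i k) ^ (n + 1) * |hermiteCoeff φ (down i k)|) := by ring
    _ ≤ _ := by gcongr; exact h _

lemma good_X (i : Fin d) : Xop i ∈ goodAlg d := by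
  intro n
  refine ⟨n + 1, 1 + 2 ^ (n + 1), by positivity, fun φ B h k => ?_⟩
  have a := up_bound n i φ B h k
  have b := down_bound n i φ B h k
  rw [coeff_X]
  refine le_trans (mul_le_mul_of_nonneg_left (abs_add_le _ _) (pow_nonneg (wt_pos k).le _)) ?_
  rw [abs_mul, abs_mul, abs_of_nonneg (Real.sqrt_nonneg _), abs_of_nonneg (Real.sqrt_nonneg _)]
  linarith

lemma good_D (i : Fin d) : Dop i ∈ goodAlg d := by
  intro n
  refine ⟨n + 1, 1 + 2 ^ (n + 1), by positivity, fun φ B h k => ?_⟩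
  have a := up_bound n i φ B h k
  have b := down_bound n i φ B h k
  have hB := h.nonneg
  rw [coeff_D, abs_div, abs_two]
  have h1 : (0:ℝ) ≤ wt k ^ n := (pow_nonneg (wt_pos k).le _)
  have := mul_le_mul_of_nonneg_left (abs_sub (Real.sqrt (k i + 1) * hermiteCoeff φ (up i k))
      (Real.sqrt (k i) * hermiteCoeff φ (down i k))) h1
  rw [abs_mul, abs_mul, abs_of_nonneg (Real.sqrt_nonneg _), abs_of_nonneg (Real.sqrt_nonneg _)]
    at this
  have : (0:ℝ) ≤ 2 ^ (n+1) * B := by positivity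
  have h3 : 0 ≤ wt k ^ n * |Real.sqrt (k i + 1) * hermiteCoeff φ (up i k) -
      Real.sqrt (k i) * hermiteCoeff φ (down i k)| := by positivity
  linarith

/-- multiplication by `1+|x|^2` -/
noncomputable def Mop (d : ℕ) : Module.End ℝ (Sch d) := 1 + ∑ i, Xop i * Xop i

lemma Mop_apply (φ : Sch d) (x : Eu d) : Mop d φ x = (1 + ‖x‖ ^ 2) * φ x := by
  have h : ∀ s : Finset (Fin d), (∑ i ∈ s, Xop i * Xop i) φ x = (∑ i ∈ s, (x i) ^ 2) * φ x := by
    classical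
    intro s
    induction s using Finset.induction_on with
    | empty => simp
    | insert a s ha ih =>
      rw [Finset.sum_insert ha, Finset.sum_insert ha, LinearMap.add_apply, SchwartzMap.add_apply, ih,
        Module.End.mul_apply, Xop_apply, Xop_apply]
      ring
  rw [Mop, LinearMap.add_apply, SchwartzMap.add_apply, h, EuclideanSpace.real_norm_sq_eq]
  simp; ring

lemma Mop_pow_apply (m : ℕ) (φ : Sch d) (x : Eu d) :
    (Mop d ^ m) φ x = (1 + ‖x‖ ^ 2) ^ m * φ x := by
  induction m with
  | zero => simp
  | succ m ih => rw [pow_succ', Module.End.mul_apply, Mop_apply, ih]; ring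

lemma good_M : Mop d ∈ goodAlg d :=
  add_mem (one_mem _) (sum_mem fun i _ => mul_mem (good_X i) (good_X i))

/-- product of powers of derivatives along a list -/
noncomputable def DL (l : List (Fin d)) (α : Fin d → ℕ) : Module.End ℝ (Sch d) :=
  (l.map (fun i => Dop i ^ α i)).prod

lemma good_DL (l : List (Fin d)) (α : Fin d → ℕ) : DL l α ∈ goodAlg d := by
  apply list_prod_mem
  intro T hT
  obtain ⟨i, -, rfl⟩ := List.mem_map.1 hT
  exact pow_mem (good_D i) _

lemma coordDeriv_coe (i : Fin d) (φ : Sch d) : coordDeriv i (fun y => φ y) = fun y => Dop i φ y := by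
  ext x; rw [Dop_apply]; rfl

lemma coordDerivPow_coe (i : Fin d) (n : ℕ) (φ : Sch d) :
    coordDerivPow i n (fun y => φ y) = fun y => (Dop i ^ n) φ y := by
  induction n with
  | zero => rfl
  | succ n ih => rw [coordDerivPow, ih, coordDeriv_coe, pow_succ', Module.End.mul_apply]

lemma multiDeriv_coe (α : Fin d → ℕ) (φ : Sch d) :
    multiDeriv α (fun y => φ y) = fun y => DL (List.finRange d) α φ y := by
  unfold multiDeriv DL
  generalize List.finRange d = l
  induction l with
  | nil => rfl
  | cons a l ih =>
    rw [List.foldr_cons, ih, coordDerivPow_coe, List.map_cons, List.prod_cons, Module.End.mul_apply]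

lemma rpow_half_le (m : ℕ) (x : Eu d) : (1 + ‖x‖ ^ 2) ^ ((m : ℝ) / 2) ≤ (1 + ‖x‖ ^ 2) ^ m := by
  rw [← Real.rpow_natCast (1 + ‖x‖ ^ 2) m]
  apply Real.rpow_le_rpow_of_exponent_le
  · nlinarith [sq_nonneg ‖x‖]
  · have : (0:ℝ) ≤ m := by positivity
    linarith

lemma finite_idx (m : ℕ) : Finite {α : Fin d → ℕ // ∑ i, α i ≤ m} := by
  apply Set.Finite.subset (Set.finite_Iic (fun _ : Fin d => m))
  intro α hα i
  exact le_trans (Finset.single_le_sum (f := α) (fun _ _ => Nat.zero_le _) (Finset.mem_univ i)) hα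

/-- every classical seminorm is bounded by the coefficient norms -/
lemma star_le (d m : ℕ) : ∃ n : ℕ, ∃ C : ℝ, 0 ≤ C ∧ ∀ (φ : Sch d) (B : ℝ), Pc n φ B →
    schwartzStarSeminorm m φ ≤ C * B := by
  have := finite_idx (d := d) m
  have := Fintype.ofFinite {α : Fin d → ℕ // ∑ i, α i ≤ m}
  have h : ∀ α : {α : Fin d → ℕ // ∑ i, α i ≤ m}, Good (Mop d ^ m * DL (List.finRange d) α.1) :=
    fun α => mul_mem (pow_mem good_M _) (good_DL _ _)
  choose n C hC H using fun α => h α (3 * d)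
  have hK : 0 ≤ Ksup d := by
    unfold Ksup
    have : 0 ≤ ∑' k : Fin d → ℕ, (wt k ^ (2 * d))⁻¹ :=
      tsum_nonneg fun k => inv_nonneg.2 (pow_nonneg (wt_pos k).le _)
    positivity
  have hS : 0 ≤ ∑ α, C α := Finset.sum_nonneg fun α _ => hC α
  refine ⟨∑ α, n α, Ksup d * ∑ α, C α, by positivity, fun φ B hB => ?_⟩
  have hB0 := hB.nonneg
  have hn : 0 ≤ Ksup d * (∑ α, C α) * B := by positivity
  refine Real.iSup_le (fun α => Real.iSup_le (fun x => ?_) hn) hn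
  have a := sup_of_coeff _ _ (H α φ B (hB.mono
    (Finset.single_le_sum (f := n) (fun _ _ => Nat.zero_le _) (Finset.mem_univ α)))) x
  rw [Module.End.mul_apply, Mop_pow_apply, abs_mul, abs_of_nonneg (by positivity)] at a
  rw [multiDeriv_coe]
  have b : C α ≤ ∑ α, C α :=
    Finset.single_le_sum (f := C) (fun a _ => hC a) (Finset.mem_univ α)
  calc _ ≤ (1 + ‖x‖ ^ 2) ^ m * |DL (List.finRange d) α.1 φ x| :=
        mul_le_mul_of_nonneg_right (rpow_half_le m x) (abs_nonneg _)
    _ ≤ Ksup d * (C α * B) := a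
    _ ≤ Ksup d * ((∑ α, C α) * B) := by gcongr
    _ = _ := by ring

/-- lower bound for the star seminorm -/
lemma le_star (m : ℕ) (φ : Sch d) (α : Fin d → ℕ) (hα : ∑ i, α i ≤ m) (x : Eu d) :
    (1 + ‖x‖ ^ 2) ^ ((m : ℝ) / 2) * |DL (List.finRange d) α φ x| ≤ schwartzStarSeminorm m φ := by
  have := finite_idx (d := d) m
  unfold schwartzStarSeminorm
  refine le_trans ?_ (le_ciSup (Set.finite_range _).bddAbove ⟨α, hα⟩)
  refine le_trans ?_ (le_ciSup ?_ x)
  · rw [multiDeriv_coe]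
  · refine ⟨SchwartzMap.seminorm ℝ 0 0 ((Mop d ^ m * DL (List.finRange d) α) φ), ?_⟩
    rintro _ ⟨y, rfl⟩
    have := SchwartzMap.norm_le_seminorm ℝ ((Mop d ^ m * DL (List.finRange d) α) φ) y
    rw [Module.End.mul_apply, Mop_pow_apply, Real.norm_eq_abs, abs_mul,
      abs_of_nonneg (by positivity)] at this
    dsimp only
    rw [multiDeriv_coe]
    exact (mul_le_mul_of_nonneg_right (rpow_half_le m y) (abs_nonneg _)).trans this

lemma star_nonneg (m : ℕ) (φ : Sch d) : 0 ≤ schwartzStarSeminorm m φ :=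
  le_trans (by positivity) (le_star m φ 0 (by simp) 0)

end HermSob

namespace HermSob

variable {d : ℕ}

open scoped LineDeriv

lemma Dop_eq (i : Fin d) (φ : Sch d) : Dop i φ = ∂_{(EuclideanSpace.single i (1 : ℝ) : Eu d)} φ := rfl

lemma Dop_comm (i j : Fin d) : Commute (Dop i) (Dop j) := by
  have key : ∀ (i j : Fin d) (φ : Sch d) (x : Eu d), Dop i (Dop j φ) x =
      fderiv ℝ (fderiv ℝ φ) x (EuclideanSpace.single i 1) (EuclideanSpace.single j 1) := by
    intro i j φ x
    rw [Dop_apply]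
    have e : (fun y => Dop j φ y) = fun y => fderiv ℝ φ y (EuclideanSpace.single j 1) := by
      ext y; rw [Dop_apply]
    have h : DifferentiableAt ℝ (fderiv ℝ φ) x := by
      have := (φ.smooth 2).contDiffAt (x := x)
      exact (this.fderiv_right (m := 1) (by norm_num)).differentiableAt (by norm_num)
    change fderiv ℝ (fun y => Dop j φ y) x _ = _
    rw [e, fderiv_clm_apply h (differentiableAt_const _)]
    simp
  change Dop i * Dop j = Dop j * Dop i
  ext φ x
  rw [Module.End.mul_apply, Module.End.mul_apply, key, key]
  have := ((φ.smooth 2).contDiffAt (x := x)).isSymmSndFDerivAt (by simp)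
  exact this _ _

lemma D_mul_DL (j : Fin d) (l : List (Fin d)) (hl : l.Nodup) (hj : j ∈ l) (α : Fin d → ℕ) :
    Dop j * DL l α = DL l (up j α) := by
  induction l with
  | nil => simp at hj
  | cons a l ih =>
    unfold DL at *
    rw [List.map_cons, List.prod_cons, List.map_cons, List.prod_cons]
    rw [List.nodup_cons] at hl
    by_cases h : j = a
    · subst h
      have e : l.map (fun i => Dop i ^ up j α i) = l.map (fun i => Dop i ^ α i) := by
        apply List.map_congr_left
        intro b hb
        have : b ≠ j := fun hh => hl.1 (hh ▸ hb)
        simp [up, this]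
      rw [e, ← mul_assoc, ← pow_succ']
      simp [up]
    · have hj' : j ∈ l := by simpa [h] using hj
      rw [← ih hl.2 hj', ← mul_assoc, ← mul_assoc, ((Dop_comm j a).pow_right (α a)).eq]
      have : a ≠ j := fun hh => h hh.symm
      simp [up, this]

lemma sum_up (j : Fin d) (α : Fin d → ℕ) : ∑ i, up j α i = ∑ i, α i + 1 := by
  have := wt_up j α
  unfold wt at this
  have h : ((∑ i, up j α i : ℕ) : ℝ) = ((∑ i, α i + 1 : ℕ) : ℝ) := by
    push_cast; linarith
  exact_mod_cast h

lemma word (n : ℕ) (v : Fin n → Fin d) : ∃ α : Fin d → ℕ, ∑ i, α i = n ∧ ∀ φ : Sch d,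
    ∂^{fun i => (EuclideanSpace.single (v i) (1 : ℝ) : Eu d)} φ = DL (List.finRange d) α φ := by
  induction n with
  | zero =>
    refine ⟨0, by simp, fun φ => ?_⟩
    simp [DL]
  | succ n ih =>
    obtain ⟨α, h1, h2⟩ := ih (Fin.tail v)
    refine ⟨up (v 0) α, by rw [sum_up, h1], fun φ => ?_⟩
    rw [LineDeriv.iteratedLineDerivOp_succ_left, ← D_mul_DL (v 0) _ (List.nodup_finRange d)
      (List.mem_finRange _), Module.End.mul_apply, ← h2, Dop_eq]
    rfl

lemma mlin_norm_le (n : ℕ) (f : ContinuousMultilinearMap ℝ (fun _ : Fin n => Eu d) ℝ) (S : ℝ)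
    (h : ∀ v : Fin n → Fin d, |f (fun i => EuclideanSpace.single (v i) (1 : ℝ))| ≤ S) (hS : 0 ≤ S) :
    ‖f‖ ≤ d ^ n * S := by
  apply f.opNorm_le_bound (by positivity)
  intro m
  have hm : ∀ i, m i = ∑ j, (m i j) • (EuclideanSpace.single j (1 : ℝ) : Eu d) := by
    intro i
    ext l
    simp [Finset.sum_apply, Pi.single_apply]
  have e : f m = ∑ v : Fin n → Fin d, (∏ i, m i (v i)) *
      f (fun i => EuclideanSpace.single (v i) (1 : ℝ)) := by
    conv_lhs => rw [show m = fun i => ∑ j, (m i j) • (EuclideanSpace.single j (1 : ℝ) : Eu d) from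
      funext hm]
    rw [ContinuousMultilinearMap.map_sum]
    refine Finset.sum_congr rfl fun v _ => ?_
    rw [ContinuousMultilinearMap.map_smul_univ, smul_eq_mul]
  rw [e]
  refine (norm_sum_le _ _).trans ?_
  calc _ ≤ ∑ v : Fin n → Fin d, (∏ i, ‖m i‖) * S := by
        refine Finset.sum_le_sum fun v _ => ?_
        rw [norm_mul, norm_prod]
        refine mul_le_mul ?_ (h v) (abs_nonneg _) (Finset.prod_nonneg fun i _ => norm_nonneg _)
        exact Finset.prod_le_prod (fun i _ => norm_nonneg _) fun i _ =>
          PiLp.norm_apply_le (m i) (v i)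
    _ = _ := by simp; ring

lemma seminorm_le_star (k n m : ℕ) (hk : k ≤ m) (hn : n ≤ m) (φ : Sch d) :
    SchwartzMap.seminorm ℝ k n φ ≤ d ^ n * schwartzStarSeminorm m φ := by
  have h0 := star_nonneg m φ
  refine SchwartzMap.seminorm_le_bound ℝ k n φ (by positivity) fun x => ?_
  have hw : ‖x‖ ^ k ≤ (1 + ‖x‖ ^ 2) ^ ((m : ℝ) / 2) := by
    have h1 : ‖x‖ ≤ (1 + ‖x‖ ^ 2) ^ ((1 : ℝ) / 2) := by
      rw [← Real.sqrt_eq_rpow]; apply Real.le_sqrt_of_sq_le; linarith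
    calc ‖x‖ ^ k ≤ ((1 + ‖x‖ ^ 2) ^ ((1 : ℝ) / 2)) ^ k := by gcongr
      _ = (1 + ‖x‖ ^ 2) ^ ((k : ℝ) / 2) := by
        rw [← Real.rpow_natCast, ← Real.rpow_mul (by positivity)]; congr 1; ring
      _ ≤ _ := by
        apply Real.rpow_le_rpow_of_exponent_le
        · nlinarith [sq_nonneg ‖x‖]
        · have : (k : ℝ) ≤ m := by exact_mod_cast hk
          linarith
  have hW : 0 < (1 + ‖x‖ ^ 2) ^ ((m : ℝ) / 2) := by positivity
  have := mlin_norm_le n (iteratedFDeriv ℝ n φ x)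
    (schwartzStarSeminorm m φ / (1 + ‖x‖ ^ 2) ^ ((m : ℝ) / 2)) ?_ (by positivity)
  · calc _ ≤ (1 + ‖x‖ ^ 2) ^ ((m : ℝ) / 2) *
          (d ^ n * (schwartzStarSeminorm m φ / (1 + ‖x‖ ^ 2) ^ ((m : ℝ) / 2))) := by gcongr
      _ = _ := by field_simp
  · intro v
    obtain ⟨α, h1, h2⟩ := word n v
    rw [← SchwartzMap.iteratedLineDerivOp_eq_iteratedFDeriv, h2, le_div_iff₀ hW, mul_comm]
    exact le_star m φ α (h1.le.trans hn) x

lemma sup_seminorm_le_star (d : ℕ) (s : Finset (ℕ × ℕ)) : ∃ m : ℕ, ∃ C : ℝ, 0 ≤ C ∧ ∀ φ : Sch d,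
    (s.sup (schwartzSeminormFamily ℝ (Eu d) ℝ)) φ ≤ C * schwartzStarSeminorm m φ := by
  refine ⟨∑ q ∈ s, (q.1 + q.2), ∑ q ∈ s, (d : ℝ) ^ q.2, by positivity, fun φ => ?_⟩
  have h0 := star_nonneg (∑ q ∈ s, (q.1 + q.2)) φ
  refine Seminorm.finset_sup_apply_le (by positivity) fun q hq => ?_
  have h1 : q.1 + q.2 ≤ ∑ q ∈ s, (q.1 + q.2) :=
    Finset.single_le_sum (f := fun q : ℕ × ℕ => q.1 + q.2) (fun _ _ => Nat.zero_le _) hq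
  have h2 : (d : ℝ) ^ q.2 ≤ ∑ q ∈ s, (d : ℝ) ^ q.2 :=
    Finset.single_le_sum (f := fun q : ℕ × ℕ => (d : ℝ) ^ q.2) (fun _ _ => by positivity) hq
  refine (seminorm_le_star q.1 q.2 (∑ q ∈ s, (q.1 + q.2)) (by omega) (by omega) φ).trans ?_
  gcongr

/-- number operator summand -/
noncomputable def Nop (d : ℕ) : Module.End ℝ (Sch d) :=
  1 + ∑ i, ((1 / 2 : ℝ) • Xop i - Dop i) * ((1 / 2 : ℝ) • Xop i + Dop i)

lemma coeff_A (i : Fin d) (φ : Sch d) (k : Fin d → ℕ) :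
    hermiteCoeff (((1 / 2 : ℝ) • Xop i + Dop i) φ) k =
      Real.sqrt (k i + 1) * hermiteCoeff φ (up i k) := by
  rw [LinearMap.add_apply, LinearMap.smul_apply, coeff_add, coeff_smul, coeff_X, coeff_D]
  ring

lemma coeff_Adag (i : Fin d) (φ : Sch d) (k : Fin d → ℕ) :
    hermiteCoeff (((1 / 2 : ℝ) • Xop i - Dop i) φ) k =
      Real.sqrt (k i) * hermiteCoeff φ (down i k) := by
  rw [sub_eq_add_neg, ← neg_one_smul ℝ (Dop i), LinearMap.add_apply, LinearMap.smul_apply,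
    LinearMap.smul_apply, coeff_add, coeff_smul, coeff_smul, coeff_X, coeff_D]
  ring

lemma coeff_AA (i : Fin d) (φ : Sch d) (k : Fin d → ℕ) :
    hermiteCoeff ((((1 / 2 : ℝ) • Xop i - Dop i) * ((1 / 2 : ℝ) • Xop i + Dop i)) φ) k =
      k i * hermiteCoeff φ k := by
  rw [Module.End.mul_apply, coeff_Adag, coeff_A]
  by_cases h : k i = 0
  · simp [h]
  · rw [up_down i k h]
    have : ((down i k i : ℕ) : ℝ) + 1 = k i := by
      have : down i k i + 1 = k i := by simp [down]; omega
      exact_mod_cast this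
    rw [this, ← mul_assoc, Real.mul_self_sqrt (by positivity)]

lemma coeff_N (φ : Sch d) (k : Fin d → ℕ) :
    hermiteCoeff (Nop d φ) k = wt k * hermiteCoeff φ k := by
  have h : ∀ s : Finset (Fin d), hermiteCoeff ((∑ i ∈ s, ((1 / 2 : ℝ) • Xop i - Dop i) *
      ((1 / 2 : ℝ) • Xop i + Dop i)) φ) k = (∑ i ∈ s, (k i : ℝ)) * hermiteCoeff φ k := by
    classical
    intro s
    induction s using Finset.induction_on with
    | empty => simp [hermiteCoeff]
    | insert a s ha ih =>
      rw [Finset.sum_insert ha, Finset.sum_insert ha, LinearMap.add_apply, coeff_add, ih,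
        coeff_AA]
      ring
  rw [Nop, LinearMap.add_apply, coeff_add, h, wt, Module.End.one_apply]
  ring

lemma coeff_N_pow (n : ℕ) (φ : Sch d) (k : Fin d → ℕ) :
    hermiteCoeff ((Nop d ^ n) φ) k = wt k ^ n * hermiteCoeff φ k := by
  induction n with
  | zero => simp
  | succ n ih => rw [pow_succ', Module.End.mul_apply, coeff_N, ih]; ring

/-- continuous endomorphisms -/
def contAlg (d : ℕ) : Subalgebra ℝ (Module.End ℝ (Sch d)) where
  carrier := {T | Continuous T}
  mul_mem' := fun {S T} hS hT => hS.comp hT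
  add_mem' := fun {S T} hS hT => hS.add hT
  algebraMap_mem' := fun a => continuous_const_smul a

lemma cont_N : Nop d ∈ contAlg d := by
  have hX : ∀ i : Fin d, Xop i ∈ contAlg d := fun i =>
    (SchwartzMap.smulLeftCLM ℝ (fun x : Eu d => x i)).continuous
  have hD : ∀ i : Fin d, Dop i ∈ contAlg d := fun i =>
    (LineDeriv.lineDerivOpCLM ℝ (Sch d) (EuclideanSpace.single i (1 : ℝ) : Eu d)).continuous
  exact add_mem (one_mem _) (sum_mem fun i _ => mul_mem
    (sub_mem (Subalgebra.smul_mem _ (hX i) _) (hD i))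
    (add_mem (Subalgebra.smul_mem _ (hX i) _) (hD i)))

lemma coeff_le_L1 (φ : Sch d) (k : Fin d → ℕ) :
    |hermiteCoeff φ k| ≤ 2 ^ d * wt k ^ d * ‖SchwartzMap.toLpCLM ℝ ℝ 1 (volume : Measure (Eu d)) φ‖ := by
  have e : ‖SchwartzMap.toLpCLM ℝ ℝ 1 (volume : Measure (Eu d)) φ‖ = ∫ x, ‖φ x‖ := by
    rw [L1.norm_eq_integral_norm]
    apply integral_congr_ae
    filter_upwards [SchwartzMap.coeFn_toLp φ 1 (volume : Measure (Eu d))] with x hx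
    exact congrArg norm hx
  rw [e, ← integral_const_mul, hermiteCoeff, ← Real.norm_eq_abs]
  refine norm_integral_le_of_norm_le (φ.integrable.norm.const_mul _) (Eventually.of_forall fun x => ?_)
  rw [norm_mul, mul_comm]
  exact mul_le_mul_of_nonneg_right (sup_hD k x) (norm_nonneg _)

lemma Pc_of_star (d n : ℕ) : ∃ m : ℕ, ∃ C : ℝ, 0 ≤ C ∧ ∀ φ : Sch d,
    Pc n φ (C * schwartzStarSeminorm m φ) := by
  have hc : Continuous ((Nop d) ^ (n + d)) := pow_mem cont_N (n + d)
  obtain ⟨s, C, -, hC⟩ := Seminorm.bound_of_continuous (schwartz_withSeminorms ℝ (Eu d) ℝ)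
    ((normSeminorm ℝ _).comp ((SchwartzMap.toLpCLM ℝ ℝ 1 (volume : Measure (Eu d))).toLinearMap ∘ₗ
      ((Nop d) ^ (n + d)))) (by
        exact continuous_norm.comp
          ((SchwartzMap.toLpCLM ℝ ℝ 1 (volume : Measure (Eu d))).continuous.comp hc))
  obtain ⟨m, C', hC', H⟩ := sup_seminorm_le_star d s
  refine ⟨m, 2 ^ d * (C * C'), by positivity, fun φ k => ?_⟩
  have a := coeff_le_L1 ((Nop d ^ (n + d)) φ) k
  have b := hC φ
  have c := H φ
  have hw := wt_pos k
  rw [coeff_N_pow, abs_mul, abs_of_pos (by positivity)] at a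
  have b' : ‖SchwartzMap.toLpCLM ℝ ℝ 1 (volume : Measure (Eu d)) ((Nop d ^ (n + d)) φ)‖ ≤
    C * (C' * schwartzStarSeminorm m φ) := le_trans b (mul_le_mul_of_nonneg_left c C.2)
  have hd : 0 < wt k ^ d := by positivity
  refine le_of_mul_le_mul_left ?_ hd
  calc _ = wt k ^ (n + d) * |hermiteCoeff φ k| := by ring
    _ ≤ _ := a
    _ ≤ 2 ^ d * wt k ^ d * (C * (C' * schwartzStarSeminorm m φ)) := by gcongr
    _ = _ := by ring

lemma base_one_le (k : Fin d → ℕ) : 1 ≤ 1 + ∑ i, (k i : ℝ) ^ 2 := by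
  have : 0 ≤ ∑ i, (k i : ℝ) ^ 2 := by positivity
  linarith

lemma base_le (k : Fin d → ℕ) : 1 + ∑ i, (k i : ℝ) ^ 2 ≤ wt k ^ 2 := by
  have h : ∑ i, (k i : ℝ) ^ 2 ≤ (∑ i, (k i : ℝ)) ^ 2 :=
    Finset.sum_sq_le_sq_sum_of_nonneg (fun i _ => by positivity)
  have : 0 ≤ ∑ i, (k i : ℝ) := by positivity
  unfold wt; nlinarith

lemma wt_le_base (k : Fin d → ℕ) : wt k ≤ 1 + ∑ i, (k i : ℝ) ^ 2 := by
  unfold wt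
  gcongr with i
  exact_mod_cast Nat.le_self_pow two_ne_zero _

lemma term_le (p : ℕ) (φ : Sch d) (B : ℝ) (h : Pc (2 * p + 2 * d) φ B) (k : Fin d → ℕ) :
    ((1 + ∑ i, ((k i : ℝ)) ^ 2) ^ ((p : ℝ) / (2 * d)) * hermiteCoeff φ k) ^ 2 ≤
      B ^ 2 * (wt k ^ (2 * d))⁻¹ := by
  have hw := wt_pos k
  have hB := h.nonneg
  have h1 : (1 + ∑ i, ((k i : ℝ)) ^ 2) ^ ((p : ℝ) / (2 * d)) ≤ wt k ^ (2 * p) := by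
    calc _ ≤ (1 + ∑ i, ((k i : ℝ)) ^ 2) ^ (p : ℝ) := by
          apply Real.rpow_le_rpow_of_exponent_le (base_one_le k)
          rcases Nat.eq_zero_or_pos d with hd | hd
          · subst hd; simp
          · apply div_le_self (by positivity)
            have : (1 : ℝ) ≤ d := by exact_mod_cast hd
            linarith
      _ = (1 + ∑ i, ((k i : ℝ)) ^ 2) ^ p := Real.rpow_natCast _ _
      _ ≤ (wt k ^ 2) ^ p := by
          have := base_le k
          gcongr
      _ = _ := by rw [pow_mul]
  have h2 : |(1 + ∑ i, ((k i : ℝ)) ^ 2) ^ ((p : ℝ) / (2 * d)) * hermiteCoeff φ k| ≤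
      B * (wt k ^ (2 * d))⁻¹ := by
    rw [abs_mul, abs_of_nonneg (by positivity), ← div_eq_mul_inv, le_div_iff₀ (by positivity)]
    calc _ ≤ wt k ^ (2 * p) * |hermiteCoeff φ k| * wt k ^ (2 * d) := by gcongr
      _ = wt k ^ (2 * p + 2 * d) * |hermiteCoeff φ k| := by ring
      _ ≤ B := h k
  have h3 : (wt k ^ (2 * d))⁻¹ ≤ 1 := inv_le_one_of_one_le₀ (one_le_pow₀ (one_le_wt k))
  have h4 : 0 ≤ (wt k ^ (2 * d))⁻¹ := by positivity
  rw [← sq_abs]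
  calc _ ≤ (B * (wt k ^ (2 * d))⁻¹) ^ 2 := by gcongr
    _ = B ^ 2 * ((wt k ^ (2 * d))⁻¹ * (wt k ^ (2 * d))⁻¹) := by ring
    _ ≤ B ^ 2 * ((wt k ^ (2 * d))⁻¹ * 1) := by gcongr
    _ = _ := by ring

lemma summable_H (p : ℕ) (φ : Sch d) : Summable (fun k : Fin d → ℕ =>
    ((1 + ∑ i, ((k i : ℝ)) ^ 2) ^ ((p : ℝ) / (2 * d)) * hermiteCoeff φ k) ^ 2) := by
  obtain ⟨m, C, -, H⟩ := Pc_of_star d (2 * p + 2 * d)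
  exact Summable.of_nonneg_of_le (fun k => sq_nonneg _) (term_le p φ _ (H φ))
    (summable_wt.mul_left _)

lemma direction2 (d p : ℕ) : ∃ (m : ℕ) (c : ℝ), 0 ≤ c ∧ ∀ φ : Sch d,
    hermiteSobolevNorm (p : ℝ) φ ≤ c * schwartzStarSeminorm m φ := by
  obtain ⟨m, C, hC, H⟩ := Pc_of_star d (2 * p + 2 * d)
  refine ⟨m, C * Real.sqrt (∑' k : Fin d → ℕ, (wt k ^ (2 * d))⁻¹), by positivity, fun φ => ?_⟩
  unfold hermiteSobolevNorm
  have h := (summable_H p φ).tsum_le_tsum (term_le p φ _ (H φ)) (summable_wt.mul_left _)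
  rw [_root_.tsum_mul_left] at h
  refine (Real.sqrt_le_sqrt h).trans (le_of_eq ?_)
  have := (H φ).nonneg
  rw [Real.sqrt_mul (sq_nonneg _), Real.sqrt_sq this]
  ring

lemma Pc_of_H (n : ℕ) (φ : Sch d) :
    Pc n φ (hermiteSobolevNorm ((2 * d * n : ℕ) : ℝ) φ) := by
  intro k
  have hw := wt_pos k
  have h := (summable_H (2 * d * n) φ).le_tsum k (fun _ _ => sq_nonneg _)
  have h2 := Real.sqrt_le_sqrt h
  rw [Real.sqrt_sq_eq_abs, abs_mul, abs_of_nonneg (a := _ ^ _) (by positivity)] at h2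
  refine le_trans ?_ h2
  refine mul_le_mul_of_nonneg_right ?_ (abs_nonneg _)
  rcases Nat.eq_zero_or_pos d with hd | hd
  · subst hd; simp [wt]
  · have hd' : (d : ℝ) ≠ 0 := by positivity
    have e : ((2 * d * n : ℕ) : ℝ) / (2 * d) = n := by push_cast; field_simp
    rw [e, Real.rpow_natCast]
    exact pow_le_pow_left₀ hw.le (wt_le_base k) n

lemma direction1 (d m : ℕ) : ∃ (p : ℕ) (c : ℝ), 0 ≤ c ∧ ∀ φ : Sch d,
    schwartzStarSeminorm m φ ≤ c * hermiteSobolevNorm (p : ℝ) φ := by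
  obtain ⟨n, C, hC, H⟩ := star_le d m
  exact ⟨2 * d * n, C, hC, fun φ => H φ _ (Pc_of_H n φ)⟩

end HermSob

/-- The Hermite–Sobolev seminorms and the classical Schwartz seminorms are equivalent
families on `S(ℝ^d)`: each `‖·‖_m^*` is dominated by some `c_m ‖·‖_{H_p}` and
conversely each `‖·‖_{H_p}` is dominated by some `c_p ‖·‖_m^*`. -/
theorem stmt_18 {d : ℕ} :
    (∀ m : ℕ, ∃ (p : ℕ) (c : ℝ), 0 ≤ c ∧
      ∀ φ : SchwartzMap (EuclideanSpace ℝ (Fin d)) ℝ,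
        schwartzStarSeminorm m φ ≤ c * hermiteSobolevNorm (p : ℝ) φ) ∧
    (∀ p : ℕ, ∃ (m : ℕ) (c : ℝ), 0 ≤ c ∧
      ∀ φ : SchwartzMap (EuclideanSpace ℝ (Fin d)) ℝ,
        hermiteSobolevNorm (p : ℝ) φ ≤ c * schwartzStarSeminorm m φ) := by
  exact ⟨fun m => HermSob.direction1 d m, fun p => HermSob.direction2 d p⟩
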